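/- In any Heyting algebra α, for every finite set s : Finset ι, every family a : ι → α and every b : α: if ⊤ ≤ (s.sup (fun i => ¬(a i))) ⊔ b, then s.inf a ≤ b. (This is the paper's theorem that from a Horn-clause sequent ⊤ ⊢ ¬φ₁ ∨ ⋯ ∨ ¬φₙ ∨ ψ with exactly one positive literal, one can derive the Horn sequent φ₁ ∧ ⋯ ∧ φₙ ⊢ ψ in intuitionistic logic, without Excluded Middle.) -/

import Mathlib

theorem horn_clause_to_horn_sequent {α : Type*} [HeytingAlgebra α] {ι : Type*}
    [DecidableEq ι] (s : Finset ι) (a : ι → α) (b : α)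
    (h : ⊤ ≤ (s.sup (fun i => (a i)ᶜ)) ⊔ b) : s.inf a ≤ b := by
  have h1 : s.sup (fun i => (a i)ᶜ) ≤ (s.inf a)ᶜ :=
    Finset.sup_le fun i hi => compl_le_compl (Finset.inf_le hi)
  have h2 : (⊤ : α) ≤ (s.inf a)ᶜ ⊔ b := h.trans (sup_le_sup_right h1 b)
  calc s.inf a = s.inf a ⊓ ((s.inf a)ᶜ ⊔ b) := (inf_eq_left.mpr (le_top.trans h2)).symm
    _ = s.inf a ⊓ b := by rw [inf_sup_left, inf_compl_self, bot_sup_eq]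
    _ ≤ b := inf_le_right
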